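/- Let L and S be positive integers with S ≤ L, let γ ∈ (0,1) be the positive root of Lγ + Sγ² = 1, and let (ξ^j)_{j≥1} be the (L,S)-sequence of points. Then there exists a constant k₁ > 0 such that for every integer N ≥ 2 one has N · D(ξ¹, ξ², …, ξ^N) ≤ k₁ · log N. -/

import Mathlib

open Finset Real

noncomputable section

/-- The `k`-th digit of `n` in base `b`. -/
def lsDigit (b n k : ℕ) : ℕ := n / b ^ k % b

/-- Membership in the set `N_{L,S}`: for every `k`, the pair of consecutive digits
`(a_k(n), a_{k+1}(n))` in base `L+S` does not lie in
`{L,…,L+S−1} × {1,…,L+S−1}`. -/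
def memNLS (L S n : ℕ) : Prop :=
  ∀ k : ℕ, ¬ (L ≤ lsDigit (L + S) n k ∧ lsDigit (L + S) n k ≤ L + S - 1 ∧
      1 ≤ lsDigit (L + S) n (k + 1) ∧ lsDigit (L + S) n (k + 1) ≤ L + S - 1)

/-- The modified digit `ã`: `ã = a` if `a ≤ L−1`, and `ã = L + γ(a−L)` if `L ≤ a`. -/
def lsTilde (L : ℕ) (γ : ℝ) (a : ℕ) : ℝ :=
  if a < L then (a : ℝ) else (L : ℝ) + γ * ((a : ℝ) - (L : ℝ))

/-- The radical-inverse-type function `φ_{L,S}(n) = Σ_{k=0}^{M} ã_k(n) γ^{k+1}`,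
with `M = ⌊log_{L+S} n⌋`. -/
def lsPhi (L S : ℕ) (γ : ℝ) (n : ℕ) : ℝ :=
  ∑ k ∈ Finset.range (Nat.log (L + S) n + 1),
    lsTilde L γ (lsDigit (L + S) n k) * γ ^ (k + 1)

/-- The `(L,S)`-sequence of points: `ξ^j = φ_{L,S}(n_j)` where `n_1 < n_2 < ⋯`
is the increasing enumeration of `N_{L,S}` (so `n_j = Nat.nth (memNLS L S) (j-1)`). -/
def lsSeq (L S : ℕ) (γ : ℝ) (j : ℕ) : ℝ :=
  lsPhi L S γ (Nat.nth (memNLS L S) (j - 1))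

/-- One-dimensional discrepancy of the first `N` terms `x 1, …, x N` of a sequence:
`sup_{0 ≤ a < b ≤ 1} |(1/N) Σ_{j=1}^N χ_{[a,b)}(x j) − (b−a)|`. -/
def discrep (x : ℕ → ℝ) (N : ℕ) : ℝ :=
  ⨆ p : {p : ℝ × ℝ // 0 ≤ p.1 ∧ p.1 < p.2 ∧ p.2 ≤ 1},
    |(∑ j ∈ Finset.Icc 1 N,
        Set.indicator (Set.Ico p.1.1 p.1.2) (fun _ => (1 : ℝ)) (x j)) / N
      - (p.1.2 - p.1.1)|

/-- Two-dimensional (star) discrepancy of the first `N` terms of a sequence of points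
in the unit square:
`sup_{0 < a ≤ 1, 0 < b ≤ 1} |(1/N) Σ_{j=1}^N χ_{[0,a)×[0,b)}(x j) − ab|`. -/
def discrep2 (x : ℕ → ℝ × ℝ) (N : ℕ) : ℝ :=
  ⨆ p : {p : ℝ × ℝ // 0 < p.1 ∧ p.1 ≤ 1 ∧ 0 < p.2 ∧ p.2 ≤ 1},
    |(∑ j ∈ Finset.Icc 1 N,
        Set.indicator (Set.Ico (0 : ℝ) p.1.1) (fun _ => (1 : ℝ)) (x j).1 *
        Set.indicator (Set.Ico (0 : ℝ) p.1.2) (fun _ => (1 : ℝ)) (x j).2) / N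
      - p.1.1 * p.1.2|

/-- Prepending a least significant digit `a` to `u`. -/
lemma lsDigit_add_mul_zero {b a : ℕ} (ha : a < b) (u : ℕ) : lsDigit b (a + b * u) 0 = a := by
  simp [lsDigit, Nat.mod_eq_of_lt ha]

lemma lsDigit_add_mul_succ {b a : ℕ} (ha : a < b) (u k : ℕ) :
    lsDigit b (a + b * u) (k + 1) = lsDigit b u k := by
  unfold lsDigit
  rw [pow_succ', ← Nat.div_div_eq_div_mul, Nat.add_mul_div_left _ _ (by omega),
    Nat.div_eq_of_lt ha, zero_add]

lemma memNLS_add_mul_iff {L S a : ℕ} (ha : a < L + S) (u : ℕ) :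
    memNLS L S (a + (L + S) * u) ↔ (L ≤ a → u % (L + S) = 0) ∧ memNLS L S u := by
  have hb : ∀ n, n % (L + S) ≤ L + S - 1 := fun n => by
    have := Nat.mod_lt n (show 0 < L + S by omega)
    omega
  have h0 : lsDigit (L + S) u 0 = u % (L + S) := by simp [lsDigit]
  unfold memNLS
  rw [← Nat.and_forall_add_one]
  simp only [lsDigit_add_mul_succ ha, lsDigit_add_mul_zero ha, zero_add, h0]
  have := hb u
  refine and_congr_left fun _ => ?_
  constructor
  · intro h h1
    by_contra h2
    exact h ⟨h1, by omega, by omega, by omega⟩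
  · rintro h ⟨h1, -, h2, -⟩
    have := h h1
    omega

lemma memNLS_add_mul_of_lt {L S a : ℕ} (ha : a < L) (u : ℕ) :
    memNLS L S (a + (L + S) * u) ↔ memNLS L S u := by
  rw [memNLS_add_mul_iff (by omega)]
  exact ⟨fun h => h.2, fun h => ⟨fun h' => by omega, h⟩⟩

lemma memNLS_mul {L S : ℕ} (hL : 0 < L) (u : ℕ) :
    memNLS L S ((L + S) * u) ↔ memNLS L S u := by
  simpa using memNLS_add_mul_of_lt (S := S) hL u

lemma memNLS_zero (L S : ℕ) : memNLS L S 0 := by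
  intro k
  simp [lsDigit]

lemma memNLS_one {L S : ℕ} (hL : 0 < L) (hS : 0 < S) : memNLS L S 1 := by
  have := (memNLS_add_mul_iff (L := L) (S := S) (a := 1) (by omega) 0).2
    ⟨by simp, memNLS_zero L S⟩
  simpa using this

lemma infinite_memNLS {L S : ℕ} (hL : 0 < L) (hS : 0 < S) : (Set.ofPred (memNLS L S)).Infinite := by
  refine Set.infinite_of_injective_forall_mem
    (Nat.pow_right_injective (show 2 ≤ L + S by omega)) fun k => ?_
  induction k with
  | zero =>
    rw [pow_zero]
    exact memNLS_one hL hS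
  | succ k ih =>
    rw [pow_succ']
    exact (memNLS_mul hL _).2 ih

lemma lsPhi_eq_sum_of_lt {L S : ℕ} (hL : 0 < L) (hS : 0 < S) (γ : ℝ) {n K : ℕ} (h : n < K) :
    lsPhi L S γ n =
      ∑ k ∈ Finset.range K, lsTilde L γ (lsDigit (L + S) n k) * γ ^ (k + 1) := by
  unfold lsPhi
  refine Finset.sum_subset ?_ ?_
  · have := Nat.log_le_self (L + S) n
    exact Finset.range_subset_range.2 (by omega)
  · intro k _ hk
    have hlt : n < (L + S) ^ k :=
      Nat.lt_pow_of_log_lt (by omega) (by simp at hk; omega)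
    simp [lsDigit, Nat.div_eq_of_lt hlt, lsTilde, hL]

lemma lsPhi_add_mul {L S a : ℕ} (hL : 0 < L) (hS : 0 < S) (γ : ℝ) (ha : a < L + S) (u : ℕ) :
    lsPhi L S γ (a + (L + S) * u) = γ * (lsTilde L γ a + lsPhi L S γ u) := by
  have hu : u < a + (L + S) * u + 1 := by nlinarith
  rw [lsPhi_eq_sum_of_lt hL hS γ (K := a + (L + S) * u + 1 + 1) (by omega),
    Finset.sum_range_succ', lsPhi_eq_sum_of_lt hL hS γ hu]
  simp only [lsDigit_add_mul_succ ha, lsDigit_add_mul_zero ha]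
  rw [mul_add, Finset.mul_sum, add_comm]
  congr 1
  · ring
  · exact Finset.sum_congr rfl fun k _ => by ring

lemma lsPhi_add_mul_of_lt {L S a : ℕ} (hS : 0 < S) (γ : ℝ) (ha : a < L) (u : ℕ) :
    lsPhi L S γ (a + (L + S) * u) = γ * (a + lsPhi L S γ u) := by
  rw [lsPhi_add_mul (by omega) hS γ (by omega)]
  simp [lsTilde, ha]

lemma lsPhi_add_sq_mul {L S i : ℕ} (hL : 0 < L) (γ : ℝ) (hi : i < S) (v : ℕ) :
    lsPhi L S γ (L + i + (L + S) ^ 2 * v) = L * γ + γ ^ 2 * (i + lsPhi L S γ v) := by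
  rw [pow_two, mul_assoc, lsPhi_add_mul hL (by omega) γ (by omega)]
  have := lsPhi_add_mul_of_lt (S := S) (by omega) γ hL v
  simp only [zero_add, Nat.cast_zero] at this
  rw [this]
  simp [lsTilde]
  ring

lemma lsPhi_nonneg (L S : ℕ) {γ : ℝ} (hγ : 0 ≤ γ) (n : ℕ) : 0 ≤ lsPhi L S γ n := by
  refine Finset.sum_nonneg fun k _ => mul_nonneg ?_ (by positivity)
  unfold lsTilde
  split_ifs with h
  · positivity
  · have : (L : ℝ) ≤ (lsDigit (L + S) n k : ℝ) := by exact_mod_cast not_lt.1 h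
    have := mul_nonneg hγ (sub_nonneg.2 this)
    positivity

lemma memNLS_add_sq_mul {L S i : ℕ} (hL : 0 < L) (hi : i < S) (v : ℕ) :
    memNLS L S (L + i + (L + S) ^ 2 * v) ↔ memNLS L S v := by
  rw [pow_two, mul_assoc, memNLS_add_mul_iff (by omega), memNLS_mul hL]
  simp

lemma memNLS_mod_sq {L S n i : ℕ} (hi : i < S) (hn : memNLS L S n)
    (hmod : n % (L + S) = L + i) : n % (L + S) ^ 2 = L + i := by
  have h1 := Nat.mod_add_div n (L + S)
  rw [hmod] at h1
  rw [← h1, memNLS_add_mul_iff (by omega)] at hn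
  have h2 := hn.1 (by omega)
  rw [pow_two, Nat.mod_mul, hmod, h2]
  simp

lemma lsPhi_lt_one {L S : ℕ} (hL : 0 < L) (hS : 0 < S) {γ : ℝ} (hγ : 0 < γ)
    (hroot : (L : ℝ) * γ + (S : ℝ) * γ ^ 2 = 1) (n : ℕ) (hn : memNLS L S n) :
    lsPhi L S γ n < 1 := by
  induction n using Nat.strong_induction_on with
  | _ n ih =>
  rcases Nat.eq_zero_or_pos n with rfl | hpos
  · simp [lsPhi, lsDigit, lsTilde, hL]
  have hSγ : 0 ≤ (S : ℝ) * γ ^ 2 := by positivity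
  have hmod := Nat.mod_lt n (show 0 < L + S by omega)
  rcases lt_or_ge (n % (L + S)) L with h | h
  · have h1 := Nat.mod_add_div n (L + S)
    rw [← h1, memNLS_add_mul_of_lt h] at hn
    have h2 := ih _ (Nat.div_lt_self hpos (by omega)) hn
    rw [← h1, lsPhi_add_mul_of_lt hS γ h]
    have h3 : ((n % (L + S) : ℕ) : ℝ) + 1 ≤ L := by exact_mod_cast h
    nlinarith
  · obtain ⟨i, hi⟩ := Nat.exists_eq_add_of_le h
    have hiS : i < S := by omega
    have h0 := memNLS_mod_sq hiS hn hi
    have h1 := Nat.mod_add_div n ((L + S) ^ 2)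
    rw [h0] at h1
    rw [← h1, memNLS_add_sq_mul hL hiS] at hn
    have h2 := ih _ (Nat.div_lt_self hpos (Nat.one_lt_pow (by omega) (by omega))) hn
    rw [← h1, lsPhi_add_sq_mul hL γ hiS]
    have h3 : (i : ℝ) + 1 ≤ S := by exact_mod_cast hiS
    have h4 : 0 < γ ^ 2 := by positivity
    nlinarith

/-- The elements of a residue class below `X` correspond, up to one, to the quotients below
`X / M`. -/
lemma card_filter_mod_bounds {M a : ℕ} (ha : a < M) (Q : ℕ → Prop) [DecidablePred Q]
    (X : ℕ) :
    #{u ∈ range (X / M) | Q (a + M * u)} ≤ #{n ∈ range X | n % M = a ∧ Q n} ∧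
    #{n ∈ range X | n % M = a ∧ Q n} ≤ #{u ∈ range (X / M) | Q (a + M * u)} + 1 := by
  have hM : 0 < M := by omega
  have hinj : Function.Injective fun u => a + M * u := fun u v h => by
    simpa [hM.ne'] using h
  constructor
  · rw [← Finset.card_image_of_injective _ hinj]
    refine Finset.card_le_card fun n hn => ?_
    obtain ⟨u, hu, rfl⟩ := Finset.mem_image.1 hn
    simp only [Finset.mem_filter, Finset.mem_range] at hu ⊢
    refine ⟨?_, by simp [Nat.mod_eq_of_lt ha], hu.2⟩
    have h1 := Nat.div_mul_le_self X M
    nlinarith [hu.1]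
  · have h1 : #{u ∈ range (X / M + 1) | Q (a + M * u)} ≤
        #{u ∈ range (X / M) | Q (a + M * u)} + 1 := by
      rw [Finset.range_add_one, Finset.filter_insert]
      split_ifs
      · exact Finset.card_insert_le _ _
      · omega
    refine le_trans ?_ h1
    rw [← Finset.card_image_of_injective {u ∈ range (X / M + 1) | Q (a + M * u)} hinj]
    refine Finset.card_le_card fun n hn => ?_
    simp only [Finset.mem_filter, Finset.mem_range, Finset.mem_image] at hn ⊢
    obtain ⟨hnX, hmod, hQ⟩ := hn
    have h2 := Nat.mod_add_div n M
    rw [hmod] at h2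
    refine ⟨n / M, ⟨Nat.lt_succ_of_le (Nat.div_le_div_right hnX.le), ?_⟩, h2⟩
    rwa [h2]

open Classical in
/-- The number of elements of `N_{L,S}` below `X` whose image under `φ_{L,S}` is below `x`. -/
def lsCount (L S : ℕ) (γ : ℝ) (X : ℕ) (x : ℝ) : ℕ :=
  #{n ∈ range X | memNLS L S n ∧ lsPhi L S γ n < x}

lemma lsCount_zero (L S : ℕ) (γ x : ℝ) : lsCount L S γ 0 x = 0 := by
  simp [lsCount]

lemma lsCount_of_nonpos (L S : ℕ) {γ x : ℝ} (hγ : 0 ≤ γ) (X : ℕ) (hx : x ≤ 0) :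
    lsCount L S γ X x = 0 := by
  classical
  unfold lsCount
  rw [Finset.card_eq_zero, Finset.filter_eq_empty_iff]
  rintro n - ⟨-, h⟩
  linarith [lsPhi_nonneg L S hγ n]

lemma lsCount_of_one_le {L S : ℕ} (hL : 0 < L) (hS : 0 < S) {γ x : ℝ} (hγ : 0 < γ)
    (hroot : (L : ℝ) * γ + (S : ℝ) * γ ^ 2 = 1) (X : ℕ) (hx : 1 ≤ x) :
    lsCount L S γ X x = lsCount L S γ X 1 := by
  classical
  unfold lsCount
  congr 1
  refine Finset.filter_congr fun n _ => and_congr_right fun hn => ?_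
  have := lsPhi_lt_one hL hS hγ hroot n hn
  exact ⟨fun _ => this, fun _ => by linarith⟩

lemma lsCount_mono (L S : ℕ) (γ x : ℝ) {X Y : ℕ} (h : X ≤ Y) :
    lsCount L S γ X x ≤ lsCount L S γ Y x := by
  classical
  exact Finset.card_le_card (Finset.filter_subset_filter _ (Finset.range_subset_range.2 h))

/-- Sorting by the first block of digits expresses a count below `X` through counts below
`X / b` and `X / b ^ 2`, up to an error of at most `b = L + S`. -/
lemma lsCount_recursion {L S : ℕ} (hL : 0 < L) (hS : 0 < S) {γ : ℝ} (hγ : 0 < γ) (X : ℕ)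
    (x : ℝ) :
    ∑ a ∈ range L, lsCount L S γ (X / (L + S)) (x / γ - a) +
        ∑ i ∈ range S, lsCount L S γ (X / (L + S) ^ 2) ((x - L * γ) / γ ^ 2 - i) ≤
      lsCount L S γ X x ∧
    lsCount L S γ X x ≤ ∑ a ∈ range L, lsCount L S γ (X / (L + S)) (x / γ - a) +
        ∑ i ∈ range S, lsCount L S γ (X / (L + S) ^ 2) ((x - L * γ) / γ ^ 2 - i) + (L + S) := by
  classical
  set Q : ℕ → Prop := fun n => memNLS L S n ∧ lsPhi L S γ n < x with hQ
  have hsplit : lsCount L S γ X x =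
      ∑ a ∈ range L, #{n ∈ range X | n % (L + S) = a ∧ Q n} +
      ∑ i ∈ range S, #{n ∈ range X | n % (L + S) ^ 2 = L + i ∧ Q n} := by
    have h1 : lsCount L S γ X x =
        ∑ a ∈ range (L + S), #{n ∈ range X | n % (L + S) = a ∧ Q n} := by
      unfold lsCount
      rw [Finset.card_eq_sum_card_fiberwise (f := fun n => n % (L + S)) (t := range (L + S))
        (fun n _ => Finset.mem_coe.2 (Finset.mem_range.2 (Nat.mod_lt _ (by omega))))]
      refine Finset.sum_congr rfl fun a _ => ?_
      rw [Finset.filter_filter]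
      congr 1
      exact Finset.filter_congr fun n _ => and_comm
    rw [h1, Finset.sum_range_add]
    congr 1
    refine Finset.sum_congr rfl fun i hi => ?_
    congr 1
    refine Finset.filter_congr fun n _ => and_congr_left fun hn => ?_
    have hiS : i < S := Finset.mem_range.1 hi
    refine ⟨fun h => memNLS_mod_sq hiS hn.1 h, fun h => ?_⟩
    rw [← Nat.mod_mod_of_dvd n (Dvd.intro_left _ (pow_succ (L + S) 1).symm), h,
      Nat.mod_eq_of_lt (by omega)]
  have hfirst : ∀ a ∈ range L,
      #{u ∈ range (X / (L + S)) | Q (a + (L + S) * u)} =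
        lsCount L S γ (X / (L + S)) (x / γ - a) := fun a ha => by
    have ha' : a < L := Finset.mem_range.1 ha
    unfold lsCount
    congr 1
    refine Finset.filter_congr fun u _ => ?_
    simp only [hQ, memNLS_add_mul_of_lt ha', lsPhi_add_mul_of_lt hS γ ha']
    rw [lt_sub_iff_add_lt, lt_div_iff₀ hγ, mul_comm γ, add_comm (a : ℝ)]
  have hsecond : ∀ i ∈ range S,
      #{v ∈ range (X / (L + S) ^ 2) | Q (L + i + (L + S) ^ 2 * v)} =
        lsCount L S γ (X / (L + S) ^ 2) ((x - L * γ) / γ ^ 2 - i) := fun i hi => by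
    have hi' : i < S := Finset.mem_range.1 hi
    unfold lsCount
    congr 1
    refine Finset.filter_congr fun u _ => ?_
    simp only [hQ, memNLS_add_sq_mul hL hi', lsPhi_add_sq_mul hL γ hi']
    rw [lt_sub_iff_add_lt, lt_div_iff₀ (by positivity), lt_sub_iff_add_lt', mul_comm (γ ^ 2),
      add_comm (i : ℝ)]
  have hb : ∀ i ∈ range S, L + i < (L + S) ^ 2 := fun i hi => by
    have := Finset.mem_range.1 hi
    nlinarith
  have hcard : ∀ (n : ℕ) (f : ℕ → ℕ), ∑ a ∈ range n, (f a + 1) = ∑ a ∈ range n, f a + n :=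
    fun n f => by simp [Finset.sum_add_distrib]
  rw [hsplit, ← Finset.sum_congr rfl hfirst, ← Finset.sum_congr rfl hsecond]
  constructor
  · refine add_le_add (Finset.sum_le_sum fun a ha => ?_) (Finset.sum_le_sum fun i hi => ?_)
    · exact (card_filter_mod_bounds (Nat.lt_add_right S (Finset.mem_range.1 ha)) Q X).1
    · exact (card_filter_mod_bounds (hb i hi) Q X).1
  · rw [add_add_add_comm, ← hcard, ← hcard]
    refine add_le_add (Finset.sum_le_sum fun a ha => ?_) (Finset.sum_le_sum fun i hi => ?_)
    · exact (card_filter_mod_bounds (Nat.lt_add_right S (Finset.mem_range.1 ha)) Q X).2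
    · exact (card_filter_mod_bounds (hb i hi) Q X).2

lemma lsCount_one_recursion {L S : ℕ} (hL : 0 < L) (hS : 0 < S) {γ : ℝ} (hγ : 0 < γ)
    (hroot : (L : ℝ) * γ + (S : ℝ) * γ ^ 2 = 1) (X : ℕ) :
    L * lsCount L S γ (X / (L + S)) 1 + S * lsCount L S γ (X / (L + S) ^ 2) 1 ≤
      lsCount L S γ X 1 ∧
    lsCount L S γ X 1 ≤ L * lsCount L S γ (X / (L + S)) 1 +
      S * lsCount L S γ (X / (L + S) ^ 2) 1 + (L + S) := by
  have h := lsCount_recursion hL hS hγ X 1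
  have h1 : ∀ a ∈ range L, lsCount L S γ (X / (L + S)) (1 / γ - a) =
      lsCount L S γ (X / (L + S)) 1 := fun a ha => by
    refine lsCount_of_one_le hL hS hγ hroot _ ?_
    have ha' : (a : ℝ) + 1 ≤ L := by exact_mod_cast Finset.mem_range.1 ha
    have : (L : ℝ) ≤ 1 / γ := by
      rw [le_div_iff₀ hγ]
      nlinarith [show 0 ≤ (S : ℝ) * γ ^ 2 by positivity]
    linarith
  have h2 : ∀ i ∈ range S, lsCount L S γ (X / (L + S) ^ 2) ((1 - L * γ) / γ ^ 2 - i) =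
      lsCount L S γ (X / (L + S) ^ 2) 1 := fun i hi => by
    refine lsCount_of_one_le hL hS hγ hroot _ ?_
    have hi' : (i : ℝ) + 1 ≤ S := by exact_mod_cast Finset.mem_range.1 hi
    have : (1 - L * γ) / γ ^ 2 = S := by
      rw [div_eq_iff (by positivity)]
      linarith
    linarith
  rw [Finset.sum_congr rfl h1, Finset.sum_congr rfl h2] at h
  simpa using h

lemma abs_lsCount_div_sub_le {L S : ℕ} (hL : 0 < L) (hS : 0 < S) {γ : ℝ} (hγ : 0 < γ)
    (hroot : (L : ℝ) * γ + (S : ℝ) * γ ^ 2 = 1) {H : ℝ}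
    (hH : (S : ℝ) * γ * H + γ * (L + S) ≤ H) (hH0 : 0 ≤ H) (X : ℕ) :
    |(lsCount L S γ (X / (L + S)) 1 : ℝ) - γ * lsCount L S γ X 1| ≤ H := by
  induction X using Nat.strong_induction_on with
  | _ X ih =>
  rcases Nat.eq_zero_or_pos X with rfl | hpos
  · simpa [lsCount_zero] using hH0
  have h1 := ih (X / (L + S)) (Nat.div_lt_self hpos (by omega))
  rw [Nat.div_div_eq_div_mul, ← pow_two] at h1
  have h2 := lsCount_one_recursion hL hS hγ hroot X
  set A := lsCount L S γ X 1
  set B := lsCount L S γ (X / (L + S)) 1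
  set C := lsCount L S γ (X / (L + S) ^ 2) 1
  obtain ⟨h3, h4⟩ := h2
  have h3' : (L : ℝ) * B + S * C ≤ A := by exact_mod_cast h3
  have h4' : (A : ℝ) ≤ L * B + S * C + (L + S) := by exact_mod_cast h4
  have hkey : (B : ℝ) - γ * A =
      -(S * γ * (C - γ * B)) - γ * (A - (L * B + S * C)) := by
    linear_combination (-(B : ℝ)) * hroot
  have hSγ : 0 < (S : ℝ) * γ := by positivity
  have h5 := mul_le_mul_of_nonneg_left (abs_le.1 h1).1 hSγ.le
  have h6 := mul_le_mul_of_nonneg_left (abs_le.1 h1).2 hSγ.le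
  have h7 : 0 ≤ γ * ((A : ℝ) - (L * B + S * C)) := mul_nonneg hγ.le (by linarith)
  have h8 : γ * ((A : ℝ) - (L * B + S * C)) ≤ γ * (L + S) :=
    mul_le_mul_of_nonneg_left (by linarith) hγ.le
  have h9 : 0 ≤ γ * ((L : ℝ) + S) := by positivity
  rw [hkey, abs_le]
  constructor <;> linarith

lemma two_pow_le_lsCount_sq {L S : ℕ} (hL : 0 < L) (hS : 0 < S) {γ : ℝ} (hγ : 0 < γ)
    (hroot : (L : ℝ) * γ + (S : ℝ) * γ ^ 2 = 1) (k X : ℕ) (hX : (L + S) ^ k ≤ X) :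
    2 ^ k ≤ 2 * lsCount L S γ X 1 ^ 2 := by
  have hpos : 0 < X → 1 ≤ lsCount L S γ X 1 := fun h => by
    refine Finset.card_pos.2 ⟨0, ?_⟩
    simp [h, memNLS_zero L S, lsPhi_lt_one hL hS hγ hroot 0 (memNLS_zero L S)]
  induction k using Nat.twoStepInduction generalizing X with
  | zero =>
    have := hpos (by rw [pow_zero] at hX; omega)
    nlinarith
  | one =>
    have := hpos (by rw [pow_one] at hX; omega)
    nlinarith
  | more k ih _ =>
    have hb : 0 < (L + S) ^ 2 := by positivity
    have h1 : (L + S) ^ k ≤ X / (L + S) ^ 2 := by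
      rwa [Nat.le_div_iff_mul_le hb, ← pow_add]
    have h0 : 0 < X / (L + S) ^ 2 := lt_of_lt_of_le (by positivity) h1
    have h2 := ih _ h1 (fun _ => Finset.card_pos.2 ⟨0, by
      simp [h0, memNLS_zero L S, lsPhi_lt_one hL hS hγ hroot 0 (memNLS_zero L S)]⟩)
    have h3 := (lsCount_one_recursion hL hS hγ hroot X).1
    have h4 : lsCount L S γ (X / (L + S) ^ 2) 1 ≤ lsCount L S γ (X / (L + S)) 1 :=
      lsCount_mono _ _ _ _ (Nat.div_le_div_left (by nlinarith) (by omega))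
    have h5 : 2 * lsCount L S γ (X / (L + S) ^ 2) 1 ≤ lsCount L S γ X 1 := by nlinarith
    calc 2 ^ (k + 2) = 4 * 2 ^ k := by ring
      _ ≤ 2 * (2 * lsCount L S γ (X / (L + S) ^ 2) 1) ^ 2 := by nlinarith
      _ ≤ _ := by gcongr

/-- A sum of a step-like function which jumps from `A` to `0` at `c`. -/
lemma sum_range_step {f : ℕ → ℝ} {A : ℝ} {n c : ℕ} (hc : c < n) (hlt : ∀ a < c, f a = A)
    (hgt : ∀ a, c < a → f a = 0) : ∑ a ∈ range n, f a = c * A + f c := by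
  obtain ⟨d, rfl⟩ := Nat.exists_eq_add_of_lt hc
  rw [show c + d + 1 = (c + 1) + d by ring, Finset.sum_range_add, Finset.sum_range_succ,
    Finset.sum_congr rfl (fun a ha => hlt a (Finset.mem_range.1 ha)),
    Finset.sum_eq_zero (fun i _ => hgt (c + 1 + i) (by omega))]
  simp

/-- Only the block containing `y` contributes a nontrivial count. -/
lemma sum_lsCount_sub {L S : ℕ} (hL : 0 < L) (hS : 0 < S) {γ : ℝ} (hγ : 0 < γ)
    (hroot : (L : ℝ) * γ + (S : ℝ) * γ ^ 2 = 1) (X : ℕ) {y : ℝ} (hy : 0 ≤ y) {n : ℕ}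
    (hyn : y < n) :
    ∑ a ∈ range n, (lsCount L S γ X (y - a) : ℝ) =
      ⌊y⌋₊ * (lsCount L S γ X 1 : ℝ) + lsCount L S γ X (y - ⌊y⌋₊) := by
  refine sum_range_step ((Nat.floor_lt hy).2 hyn) (fun a ha => ?_) (fun a ha => ?_)
  · rw [lsCount_of_one_le hL hS hγ hroot]
    have h1 : (a : ℝ) + 1 ≤ ⌊y⌋₊ := by exact_mod_cast ha
    linarith [Nat.floor_le hy]
  · rw [lsCount_of_nonpos L S hγ.le, Nat.cast_zero]
    linarith [(Nat.floor_lt hy).1 ha]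

lemma abs_lsCount_sub_le {L S : ℕ} (hL : 0 < L) (hS : 0 < S) {γ : ℝ} (hγ : 0 < γ)
    (hγ1 : γ < 1) (hroot : (L : ℝ) * γ + (S : ℝ) * γ ^ 2 = 1) {H : ℝ}
    (hH : (S : ℝ) * γ * H + γ * (L + S) ≤ H) (hH0 : 0 ≤ H) (l X : ℕ)
    (hX : X < (L + S) ^ l) (x : ℝ) (hx0 : 0 ≤ x) (hx1 : x ≤ 1) :
    |(lsCount L S γ X x : ℝ) - x * lsCount L S γ X 1| ≤
      (L + S + L * H + 2 * S * H) * l := by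
  have hK : 0 ≤ (L : ℝ) + S + L * H + 2 * S * H := by positivity
  induction l generalizing X x with
  | zero =>
    obtain rfl : X = 0 := by simpa using hX
    simp [lsCount_zero]
  | succ l ih =>
  rcases hx1.eq_or_lt with rfl | hx1
  · rw [one_mul, sub_self, abs_zero]
    positivity
  have hG := abs_lsCount_div_sub_le hL hS hγ hroot hH hH0 X
  have hG' := abs_lsCount_div_sub_le hL hS hγ hroot hH hH0 (X / (L + S))
  rw [Nat.div_div_eq_div_mul, ← pow_two] at hG'
  have hrec := lsCount_recursion hL hS hγ X x
  have hX1 : X / (L + S) < (L + S) ^ l := by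
    rw [Nat.div_lt_iff_lt_mul (by omega), ← pow_succ]
    exact hX
  have hX2 : X / (L + S) ^ 2 < (L + S) ^ l :=
    lt_of_le_of_lt (Nat.div_le_div_left (by nlinarith) (by omega)) hX1
  set A := lsCount L S γ X 1
  set B := lsCount L S γ (X / (L + S)) 1
  set C := lsCount L S γ (X / (L + S) ^ 2) 1
  rcases lt_or_ge x (L * γ) with hx | hx
  · have h2 : ∑ i ∈ range S, lsCount L S γ (X / (L + S) ^ 2) ((x - L * γ) / γ ^ 2 - i) = 0 := by
      refine Finset.sum_eq_zero fun i _ => lsCount_of_nonpos L S hγ.le _ ?_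
      have := div_nonpos_of_nonpos_of_nonneg (show x - L * γ ≤ 0 by linarith) (sq_nonneg γ)
      have : (0 : ℝ) ≤ i := by positivity
      linarith
    have hy : 0 ≤ x / γ := by positivity
    have hyL : x / γ < L := by rwa [div_lt_iff₀ hγ]
    have h1 := sum_lsCount_sub hL hS hγ hroot (X / (L + S)) hy hyL
    rw [h2, add_zero] at hrec
    have hr1 : ((∑ a ∈ range L, lsCount L S γ (X / (L + S)) (x / γ - a) : ℕ) : ℝ) ≤
      lsCount L S γ X x := by exact_mod_cast hrec.1
    have hr2 : (lsCount L S γ X x : ℝ) ≤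
      ((∑ a ∈ range L, lsCount L S γ (X / (L + S)) (x / γ - a) : ℕ) : ℝ) + (L + S) := by
      exact_mod_cast hrec.2
    push_cast at hr1 hr2
    rw [h1] at hr1 hr2
    have hi := ih _ hX1 (x / γ - ⌊x / γ⌋₊) (by linarith [Nat.floor_le hy])
      (by linarith [Nat.lt_floor_add_one (x / γ)])
    have hxA : x * (A : ℝ) = x / γ * (γ * A) := by field_simp
    have hm : |x / γ * ((B : ℝ) - γ * A)| ≤ L * H := by
      rw [abs_mul, abs_of_nonneg hy]
      exact mul_le_mul hyL.le hG (abs_nonneg _) (by positivity)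
    have : 0 ≤ 2 * S * H := by positivity
    push_cast
    rw [abs_le] at hi hm ⊢
    rw [hxA]
    constructor <;> linarith [hi.1, hi.2, hm.1, hm.2]
  · have h2 : ∀ a ∈ range L, (lsCount L S γ (X / (L + S)) (x / γ - a) : ℝ) = B := fun a ha => by
      rw [lsCount_of_one_le hL hS hγ hroot]
      have ha' : (a : ℝ) + 1 ≤ L := by exact_mod_cast Finset.mem_range.1 ha
      have : (L : ℝ) ≤ x / γ := by rwa [le_div_iff₀ hγ]
      linarith
    set y := (x - L * γ) / γ ^ 2 with hydef
    have hy : 0 ≤ y := div_nonneg (by linarith) (sq_nonneg γ)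
    have hyS : y < S := by
      rw [hydef, div_lt_iff₀ (by positivity)]
      linarith
    have hxy : x = L * γ + y * γ ^ 2 := by
      rw [hydef]
      field_simp
      ring
    have h1 := sum_lsCount_sub hL hS hγ hroot (X / (L + S) ^ 2) hy hyS
    have hr1 : ((∑ a ∈ range L, lsCount L S γ (X / (L + S)) (x / γ - a) +
        ∑ i ∈ range S, lsCount L S γ (X / (L + S) ^ 2) (y - i) : ℕ) : ℝ) ≤
      lsCount L S γ X x := by exact_mod_cast hrec.1
    have hr2 : (lsCount L S γ X x : ℝ) ≤
      ((∑ a ∈ range L, lsCount L S γ (X / (L + S)) (x / γ - a) +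
        ∑ i ∈ range S, lsCount L S γ (X / (L + S) ^ 2) (y - i) : ℕ) : ℝ) + (L + S) := by
      exact_mod_cast hrec.2
    push_cast at hr1 hr2
    rw [h1, Finset.sum_congr rfl h2, Finset.sum_const, Finset.card_range, nsmul_eq_mul]
      at hr1 hr2
    have hi := ih _ hX2 (y - ⌊y⌋₊) (by linarith [Nat.floor_le hy])
      (by linarith [Nat.lt_floor_add_one y])
    have hm1 : |(L : ℝ) * ((B : ℝ) - γ * A)| ≤ L * H := by
      rw [abs_mul, abs_of_nonneg (Nat.cast_nonneg L)]
      gcongr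
    have hm2 : |y * (((C : ℝ) - γ * B) + γ * (B - γ * A))| ≤ S * (H + 1 * H) := by
      rw [abs_mul, abs_of_nonneg hy]
      refine mul_le_mul hyS.le ((abs_add_le _ _).trans ?_) (abs_nonneg _) (by positivity)
      rw [abs_mul, abs_of_pos hγ]
      gcongr
    have hxA : x * (A : ℝ) = L * (γ * A) + y * (γ ^ 2 * A) := by
      rw [hxy]
      ring
    push_cast
    rw [abs_le] at hi hm1 hm2 ⊢
    rw [hxA]
    constructor <;> linarith [hi.1, hi.2, hm1.1, hm1.2, hm2.1, hm2.2]

lemma image_nth_range {p : ℕ → Prop} [DecidablePred p] (hp : (Set.ofPred p).Infinite) (N : ℕ) :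
    (range N).image (Nat.nth p) = {n ∈ range (Nat.nth p N) | p n} := by
  ext n
  simp only [Finset.mem_image, Finset.mem_range, Finset.mem_filter]
  constructor
  · rintro ⟨i, hi, rfl⟩
    exact ⟨(Nat.nth_lt_nth hp).2 hi, Nat.nth_mem_of_infinite hp i⟩
  · rintro ⟨h1, h2⟩
    exact ⟨Nat.count p n, (Nat.nth_lt_nth hp).1 (by rwa [Nat.nth_count h2]), Nat.nth_count h2⟩

open Classical in
lemma card_filter_range_lsPhi_nth {L S : ℕ} (hL : 0 < L) (hS : 0 < S) (γ : ℝ) (N : ℕ)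
    (x : ℝ) :
    #{i ∈ range N | lsPhi L S γ (Nat.nth (memNLS L S) i) < x} =
      lsCount L S γ (Nat.nth (memNLS L S) N) x := by
  have hinf := infinite_memNLS hL hS
  unfold lsCount
  rw [← Finset.filter_filter, ← image_nth_range hinf, Finset.filter_image,
    Finset.card_image_of_injective _ (Nat.nth_injective hinf)]

lemma sum_indicator_lsSeq {L S : ℕ} (hL : 0 < L) (hS : 0 < S) (γ : ℝ) (N : ℕ) {x y : ℝ}
    (hxy : x ≤ y) :
    ∑ j ∈ Finset.Icc 1 N, Set.indicator (Set.Ico x y) (fun _ => (1 : ℝ)) (lsSeq L S γ j) =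
      lsCount L S γ (Nat.nth (memNLS L S) N) y - lsCount L S γ (Nat.nth (memNLS L S) N) x := by
  classical
  rw [← card_filter_range_lsPhi_nth hL hS, ← card_filter_range_lsPhi_nth hL hS,
    Finset.natCast_card_filter, Finset.natCast_card_filter, ← Finset.sum_sub_distrib,
    Finset.range_eq_Ico, ← Finset.Ico_add_one_right_eq_Icc, Finset.sum_Ico_eq_sum_range,
    Finset.sum_Ico_eq_sum_range]
  refine Finset.sum_congr (by simp) fun i _ => ?_
  simp only [lsSeq, Nat.add_sub_cancel_left, zero_add, Set.indicator_apply, Set.mem_Ico]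
  generalize lsPhi L S γ _ = z
  rcases lt_or_ge z x with h | h
  · simp [h, not_le.2 h, h.trans_le hxy]
  · simp [h, not_lt.2 h]

lemma lsCount_nth_one {L S : ℕ} (hL : 0 < L) (hS : 0 < S) {γ : ℝ} (hγ : 0 < γ)
    (hroot : (L : ℝ) * γ + (S : ℝ) * γ ^ 2 = 1) (N : ℕ) :
    lsCount L S γ (Nat.nth (memNLS L S) N) 1 = N := by
  classical
  rw [← card_filter_range_lsPhi_nth hL hS, Finset.filter_true_of_mem, Finset.card_range]
  exact fun i _ => lsPhi_lt_one hL hS hγ hroot _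
    (Nat.nth_mem_of_infinite (infinite_memNLS hL hS) i)

/-- If `S ≤ L`, the `(L,S)`-sequence of points has low discrepancy:
`N · D(ξ¹,…,ξ^N) ≤ k₁ log N` for all `N ≥ 2`. -/
theorem ls_discrepancy_upper_SleL (L S : ℕ) (hL : 0 < L) (hS : 0 < S) (hSL : S ≤ L)
    (γ : ℝ) (hγ0 : 0 < γ) (hγ1 : γ < 1)
    (hroot : (L : ℝ) * γ + (S : ℝ) * γ ^ 2 = 1) :
    ∃ k₁ : ℝ, 0 < k₁ ∧ ∀ N : ℕ, 2 ≤ N →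
      (N : ℝ) * discrep (lsSeq L S γ) N ≤ k₁ * Real.log N := by
  have hSγ : (S : ℝ) * γ < 1 := by
    have h1 : (S : ℝ) ≤ L := by exact_mod_cast hSL
    have h2 : 0 < (S : ℝ) * γ ^ 2 := by positivity
    nlinarith
  set H : ℝ := γ * (L + S) / (1 - S * γ) with hHdef
  have hH0 : 0 ≤ H := div_nonneg (by positivity) (by linarith)
  have hH : (S : ℝ) * γ * H + γ * (L + S) ≤ H := by
    have : H * (1 - S * γ) = γ * (L + S) := div_mul_cancel₀ _ (by linarith)
    linarith
  set K : ℝ := L + S + L * H + 2 * S * H with hKdef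
  have hK : 0 < K := by
    have : (0 : ℝ) < L := by exact_mod_cast hL
    positivity
  have hlog2 : 0 < Real.log 2 := Real.log_pos (by norm_num)
  refine ⟨2 * K * (4 / Real.log 2), by positivity, fun N hN => ?_⟩
  have hNpos : (0 : ℝ) < N := by exact_mod_cast (show 0 < N by omega)
  set X := Nat.nth (memNLS L S) N with hXdef
  set k := Nat.log (L + S) X with hkdef
  have hXN : lsCount L S γ X 1 = N := lsCount_nth_one hL hS hγ0 hroot N
  have hX0 : X ≠ 0 := fun h => by
    rw [h, lsCount_zero] at hXN
    omega
  have hlogN : Real.log 2 ≤ Real.log N := Real.log_le_log (by norm_num) (by exact_mod_cast hN)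
  have hk : ((k + 1 : ℕ) : ℝ) ≤ 4 / Real.log 2 * Real.log N := by
    have h1 := two_pow_le_lsCount_sq hL hS hγ0 hroot k X (Nat.pow_log_le_self _ hX0)
    rw [hXN] at h1
    have h2 : (2 : ℝ) ^ k ≤ 2 * (N : ℝ) ^ 2 := by exact_mod_cast h1
    have h3 := Real.log_le_log (by positivity) h2
    rw [Real.log_pow, Real.log_mul (by norm_num) (by positivity), Real.log_pow] at h3
    rw [div_mul_eq_mul_div, le_div_iff₀ hlog2]
    push_cast at h3 ⊢
    linarith
  have hR := abs_lsCount_sub_le hL hS hγ0 hγ1 hroot hH hH0 (k + 1) X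
    (Nat.lt_pow_succ_log_self (by omega) X)
  rw [hXN] at hR
  have hD : discrep (lsSeq L S γ) N ≤ 2 * (K * ((k + 1 : ℕ) : ℝ)) / N := by
    have : Nonempty {p : ℝ × ℝ // 0 ≤ p.1 ∧ p.1 < p.2 ∧ p.2 ≤ 1} :=
      ⟨⟨(0, 1), by norm_num⟩⟩
    refine ciSup_le ?_
    rintro ⟨⟨x, y⟩, hx, hxy, hy⟩
    have h1 := abs_le.1 (hR x hx (by linarith))
    have h2 := abs_le.1 (hR y (by linarith) hy)
    simp only
    rw [sum_indicator_lsSeq hL hS γ N hxy.le, ← hXdef, div_sub' hNpos.ne', abs_div,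
      abs_of_pos hNpos]
    refine div_le_div_of_nonneg_right ?_ hNpos.le
    rw [abs_le]
    constructor <;> linarith [h1.1, h1.2, h2.1, h2.2]
  calc (N : ℝ) * discrep (lsSeq L S γ) N ≤ N * (2 * (K * ((k + 1 : ℕ) : ℝ)) / N) := by gcongr
    _ = 2 * K * ((k + 1 : ℕ) : ℝ) := by field_simp
    _ ≤ 2 * K * (4 / Real.log 2 * Real.log N) := by gcongr
    _ = _ := by ring
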